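/- Let G be a finite simple graph on at least 3 vertices and t a positive integer. Suppose that for every partition P of V(G), the number of crossing edges satisfies |cr(P,G)| ≥ t(|P| - 1). Then the anti-Ramsey number r(G,t) equals the maximum, over all partitions P of V(G) with |P| ≥ 3, of |E(P,G)| + t(|P| - 2). -/

import Mathlib

open Finset
open scoped Classical

/-- The set of non-crossing edges of `G` with respect to a partition `P` of the
vertex set: edges whose two endpoints lie in the same part of `P`. -/
noncomputable def edgesNonCrossing {V : Type} [Fintype V] (G : SimpleGraph V)
    (P : Finpartition (Finset.univ : Finset V)) : Finset (Sym2 V) :=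
  G.edgeFinset.filter (fun e => ∃ p ∈ P.parts, ∀ v ∈ e, v ∈ p)

/-- The set of crossing edges of `G` with respect to a partition `P` of the
vertex set: edges whose endpoints lie in different parts of `P`. -/
noncomputable def edgesCrossing {V : Type} [Fintype V] (G : SimpleGraph V)
    (P : Finpartition (Finset.univ : Finset V)) : Finset (Sym2 V) :=
  G.edgeFinset.filter (fun e => ¬ ∃ p ∈ P.parts, ∀ v ∈ e, v ∈ p)

/-- `G`, edge-colored by `c`, contains `t` pairwise edge-disjoint rainbow
spanning trees. -/
def HasRainbowSpanningTrees {V : Type} [Fintype V] (G : SimpleGraph V)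
    (c : Sym2 V → ℕ) (t : ℕ) : Prop :=
  ∃ T : Fin t → SimpleGraph V,
    (∀ i, T i ≤ G) ∧ (∀ i, (T i).IsTree) ∧
    (∀ i, Set.InjOn c ((T i).edgeSet)) ∧
    (∀ i j, i ≠ j → Disjoint ((T i).edgeSet) ((T j).edgeSet))

/-- The anti-Ramsey number `r(G,t)`: the maximum number of colors in an
edge-coloring of `G` containing no `t` pairwise edge-disjoint rainbow spanning
trees. -/
noncomputable def antiRamsey {V : Type} [Fintype V] (G : SimpleGraph V) (t : ℕ) : ℕ :=
  sSup {m | ∃ c : Sym2 V → ℕ, (G.edgeFinset.image c).card = m ∧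
    ¬ HasRainbowSpanningTrees G c t}

/-- `max_{P : |P| ≥ 3} { |E(P,G)| + t(|P|-2) }`. -/
noncomputable def maxNonCross3 {V : Type} [Fintype V] (G : SimpleGraph V) (t : ℕ) : ℕ :=
  sSup {m | ∃ P : Finpartition (Finset.univ : Finset V), 3 ≤ P.parts.card ∧
    m = (edgesNonCrossing G P).card + t * (P.parts.card - 2)}

/-- `f_G(s)`: the maximum of `|E(P,G)|` over partitions of the vertex set into
exactly `s` parts. -/
noncomputable def fMax {V : Type} [Fintype V] (G : SimpleGraph V) (s : ℕ) : ℕ :=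
  sSup {m | ∃ P : Finpartition (Finset.univ : Finset V), P.parts.card = s ∧
    m = (edgesNonCrossing G P).card}

/-- The number of edges of `G` induced by a set `p` of vertices. -/
noncomputable def edgesWithin {V : Type} [Fintype V] (G : SimpleGraph V) (p : Finset V) : ℕ :=
  (G.edgeFinset.filter (fun e => ∀ v ∈ e, v ∈ p)).card

/-- One splitting step: remove a single vertex from a currently largest part
(measured by the number of non-crossing edges it induces) to form a new
singleton part. -/
def SplitStep {V : Type} [Fintype V] (G : SimpleGraph V)
    (P Q : Finpartition (Finset.univ : Finset V)) : Prop :=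
  ∃ p ∈ P.parts, (∀ q ∈ P.parts, edgesWithin G q ≤ edgesWithin G p) ∧
    ∃ v ∈ p, p.erase v ≠ ∅ ∧
      Q.parts = insert {v} (insert (p.erase v) (P.parts.erase p))

/-! For `≥`, colour the non-crossing edges of `P` and `t (|P| - 2) - 1` crossing edges with distinct
colours and all other edges with one further colour. A rainbow spanning tree crosses `P` at least
`|P| - 1` times and uses the further colour at most once, so `t` disjoint ones would need
`t (|P| - 2)` of the specially coloured crossing edges.

For `≤`, let `r` be the rank function of the cycle matroid and `n = |V|`. If a colouring has more
colours than the right-hand side, then Rado's theorem for the submodular function `t r` gives a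
rainbow set of `t (n - 2) + 1` edges that is independent in the union of `t` copies of the cycle
matroid. By the hypothesis on partitions this union has rank `t (n - 1)`, so the set extends to the
edge set of `t` disjoint spanning trees. Among all ways to split these edges into `t` spanning
trees, take one for which the sum of the numbers of colours of the trees is maximal. If one of its
trees repeats a colour, then, as there are more than `t (n - 2)` colours in total, some other tree
has no colour in common with it, and a symmetric exchange between these two trees increases the
sum. Hence all trees are rainbow. -/

section Submodular

variable {α ι κ : Type*} [DecidableEq α]

/-- Submodularity of a set function; values in `ℕ` suffice for multiples of rank functions. -/
def IsSubmodular (f : Finset α → ℕ) : Prop :=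
  ∀ A B, f (A ∪ B) + f (A ∩ B) ≤ f A + f B

namespace IsSubmodular

variable {f : Finset α → ℕ} {A B : Finset α} {e : α}

theorem insert_le_of_subset (hf : IsSubmodular f) (hmono : Monotone f) (hAB : A ⊆ B)
    (he : f (insert e A) ≤ f A) : f (insert e B) ≤ f B := by
  have hsub := hf (insert e A) B
  rw [insert_union, union_eq_right.2 hAB] at hsub
  have hinter : f A ≤ f (insert e A ∩ B) := hmono (subset_inter (subset_insert e A) hAB)
  omega

theorem union_le_of_forall_insert_le (hf : IsSubmodular f) (hmono : Monotone f)
    (hB : ∀ e ∈ B, f (insert e A) ≤ f A) : f (A ∪ B) ≤ f A := by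
  induction B using Finset.induction_on with
  | empty => simp
  | insert e B _ ih =>
    rw [union_insert]
    exact (hf.insert_le_of_subset hmono subset_union_left (hB e (mem_insert_self e B))).trans
      (ih fun g hg => hB g (mem_insert_of_mem hg))

theorem add_const (hf : IsSubmodular f) (d : ℕ) : IsSubmodular fun S => f S + d := fun A B => by
  simpa only [add_add_add_comm] using Nat.add_le_add_right (hf A B) (d + d)

theorem const_mul (hf : IsSubmodular f) (t : ℕ) : IsSubmodular fun S => t * f S := fun A B => by
  simpa only [mul_add] using Nat.mul_le_mul_left t (hf A B)

end IsSubmodular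

theorem exists_erase_forall_card_le_biUnion [DecidableEq ι] {f : Finset α → ℕ}
    (hf : IsSubmodular f) (hmono : Monotone f) {A : ι → Finset α}
    (hA : ∀ J : Finset ι, #J ≤ f (J.biUnion A)) {i : ι} (hi : (A i).Nontrivial) :
    ∃ z ∈ A i, ∀ J : Finset ι, #J ≤ f (J.biUnion (Function.update A i ((A i).erase z))) := by
  obtain ⟨x, hx, y, hy, hxy⟩ := hi
  by_contra! hcon
  have mem_of_lt {z : α} {J : Finset ι}
      (hJ : f (J.biUnion (Function.update A i ((A i).erase z))) < #J) : i ∈ J := by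
    by_contra hiJ
    refine (hA J).not_gt ((congrArg f (biUnion_congr rfl fun j hj => ?_)).trans_lt hJ)
    rw [Function.update_of_ne (ne_of_mem_of_not_mem hj hiJ)]
  obtain ⟨J, hJ⟩ := hcon x hx
  obtain ⟨K, hK⟩ := hcon y hy
  have hiJ : i ∈ J := mem_of_lt hJ
  have hiK : i ∈ K := mem_of_lt hK
  have mem_update {z a : α} {j : ι} :
      a ∈ Function.update A i ((A i).erase z) j ↔ a ∈ A j ∧ (j = i → a ≠ z) := by
    by_cases hj : j = i
    · subst hj
      simp [and_comm]
    · simp [hj]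
  have hunion : (J ∪ K).biUnion A ⊆ J.biUnion (Function.update A i ((A i).erase x)) ∪
      K.biUnion (Function.update A i ((A i).erase y)) := by
    intro a
    simp only [mem_biUnion, mem_union, mem_update]
    grind
  have hinter : ((J ∩ K).erase i).biUnion A ⊆ J.biUnion (Function.update A i ((A i).erase x)) ∩
      K.biUnion (Function.update A i ((A i).erase y)) := by
    intro a
    simp only [mem_biUnion, mem_inter, mem_erase, mem_update]
    grind
  have hsub := hf (J.biUnion (Function.update A i ((A i).erase x)))
    (K.biUnion (Function.update A i ((A i).erase y)))
  have hle_union := (hA (J ∪ K)).trans (hmono hunion)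
  have hle_inter := (hA ((J ∩ K).erase i)).trans (hmono hinter)
  have hcard := card_union_add_card_inter J K
  have hcard_erase := card_erase_add_one (mem_inter.2 ⟨hiJ, hiK⟩)
  omega

theorem exists_transversal_of_forall_card_le_biUnion [Finite ι] {f : Finset α → ℕ}
    (hf : IsSubmodular f) (hmono : Monotone f) {A : ι → Finset α} (hne : ∀ i, (A i).Nonempty)
    (hA : ∀ J : Finset ι, #J ≤ f (J.biUnion A)) :
    ∃ x : ι → α, (∀ i, x i ∈ A i) ∧ ∀ J : Finset ι, #J ≤ f (J.image x) := by
  obtain ⟨B, hBA, ⟨hBne, hB⟩, hmin⟩ := exists_minimal_le_of_wellFoundedLT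
    (fun B : ι → Finset α => (∀ i, (B i).Nonempty) ∧ ∀ J : Finset ι, #J ≤ f (J.biUnion B))
    A ⟨hne, hA⟩
  have hsingle : ∀ i, ∃ a, B i = {a} := by
    intro i
    refine (hBne i).exists_eq_singleton_or_nontrivial.resolve_right fun hi => ?_
    obtain ⟨z, hz, hJ⟩ := exists_erase_forall_card_le_biUnion hf hmono hB hi
    have hle : Function.update B i ((B i).erase z) ≤ B :=
      update_le_iff.2 ⟨erase_subset z (B i), fun _ _ => le_rfl⟩
    have hne' : ∀ j, (Function.update B i ((B i).erase z) j).Nonempty :=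
      (Function.forall_update_iff B fun _ S => S.Nonempty).2
        ⟨(erase_nonempty hz).2 hi, fun j _ => hBne j⟩
    exact notMem_erase z (B i) (by simpa using hmin ⟨hne', hJ⟩ hle i hz)
  choose x hx using hsingle
  obtain rfl : B = fun i => {x i} := funext hx
  exact ⟨x, fun i => hBA i (mem_singleton_self (x i)), fun J =>
    (hB J).trans_eq (congrArg f biUnion_singleton)⟩

theorem exists_injOn_forall_card_le [DecidableEq κ] {f : Finset α → ℕ} (hf : IsSubmodular f)
    (hmono : Monotone f) {E : Finset α} {c : α → κ}
    (hE : ∀ K ⊆ E.image c, #K ≤ f {e ∈ E | c e ∈ K}) :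
    ∃ X ⊆ E, X.image c = E.image c ∧ Set.InjOn c X ∧ ∀ S ⊆ X, #S ≤ f S := by
  obtain ⟨x, hx, hcard⟩ := exists_transversal_of_forall_card_le_biUnion (ι := E.image c) hf hmono
    (A := fun k => {e ∈ E | c e = k})
    (fun k => by
      obtain ⟨e, he, hek⟩ := mem_image.1 k.2
      exact ⟨e, mem_filter.2 ⟨he, hek⟩⟩) fun J => by
      refine (card_map (Function.Embedding.subtype _)).symm.trans_le
        ((hE (J.map (Function.Embedding.subtype _)) ?_).trans_eq (congrArg f ?_))
      · exact map_subtype_subset J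
      · ext e
        simp only [mem_filter, mem_map, mem_biUnion, Function.Embedding.subtype_apply]
        grind
  simp only [mem_filter] at hx
  refine ⟨univ.image x, ?_, ?_, ?_, fun S hS => ?_⟩
  · exact image_subset_iff.2 fun k _ => (hx k).1
  · ext k
    simp only [mem_image, mem_univ, true_and, exists_exists_eq_and, (hx _).2]
    simp
  · simp only [coe_image, coe_univ, Set.image_univ]
    rintro _ ⟨k, rfl⟩ _ ⟨l, rfl⟩ hkl
    rw [(hx k).2, (hx l).2] at hkl
    rw [Subtype.ext hkl]
  · obtain ⟨J, -, rfl⟩ := subset_image_iff.1 hS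
    exact card_image_le.trans (hcard J)

/-- The independent sets of the matroid induced by the set function `f`, in the sense of
Edmonds. For `f = ∑ i, r i` with matroid rank functions `r i` they are the independent sets of the
union of these matroids. -/
def InducedIndep (f : Finset α → ℕ) (S : Finset α) : Prop :=
  ∀ S' ⊆ S, #S' ≤ f S'

theorem InducedIndep.exists_tight_forall_insert_le {f : Finset α → ℕ} (hf : IsSubmodular f)
    (hmono : Monotone f) (hf₀ : f ∅ = 0) {J X : Finset α}
    (hJ : Maximal (fun S => S ⊆ X ∧ InducedIndep f S) J) :
    ∃ T ⊆ J, f T = #T ∧ ∀ e ∈ X \ J, f (insert e T) ≤ f T := by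
  obtain ⟨⟨hJX, hJind⟩, hmax⟩ := hJ
  set tight : Finset (Finset α) := {T ∈ J.powerset | f T = #T}
  have htight : tight.sup id ⊆ J ∧ f (tight.sup id) = #(tight.sup id) := by
    refine sup_induction (p := fun T => T ⊆ J ∧ f T = #T) ⟨empty_subset J, by simpa using hf₀⟩ ?_ ?_
    · rintro A ⟨hAJ, hA⟩ B ⟨hBJ, hB⟩
      have hunion := hJind _ (union_subset hAJ hBJ)
      have hinter := hJind _ (inter_subset_left.trans hAJ : A ∩ B ⊆ J)
      have hsub := hf A B
      have hcard := card_union_add_card_inter A B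
      exact ⟨union_subset hAJ hBJ, by rw [sup_eq_union]; omega⟩
    · simp [tight]
  refine ⟨tight.sup id, htight.1, htight.2, fun e he => ?_⟩
  obtain ⟨heX, heJ⟩ := mem_sdiff.1 he
  have hdep : ¬ InducedIndep f (insert e J) := fun hind =>
    heJ (hmax ⟨insert_subset heX hJX, hind⟩ (subset_insert e J) (mem_insert_self e J))
  simp only [InducedIndep, not_forall, not_le] at hdep
  obtain ⟨S, hSJ, hS⟩ := hdep
  have heS : e ∈ S := by
    by_contra heS
    exact (hJind S ((subset_insert_iff_of_notMem heS).1 hSJ)).not_gt hS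
  have hSe : S.erase e ⊆ J := subset_insert_iff.1 hSJ
  have hle := hJind _ hSe
  have hcard := card_erase_add_one heS
  have hmonoS : f (S.erase e) ≤ f S := hmono (erase_subset e S)
  have heq : f (S.erase e) = #(S.erase e) := by omega
  refine hf.insert_le_of_subset hmono (A := S.erase e) ?_ (by rw [insert_erase heS]; omega)
  exact le_sup (f := id) (mem_filter.2 ⟨mem_powerset.2 hSe, heq⟩)

theorem InducedIndep.exists_superset_rank_le {f : Finset α → ℕ} (hf : IsSubmodular f)
    (hmono : Monotone f) (hf₀ : f ∅ = 0) {I X : Finset α} (hI : InducedIndep f I) (hIX : I ⊆ X) :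
    ∃ J, I ⊆ J ∧ J ⊆ X ∧ InducedIndep f J ∧ ∃ S ⊆ X, f S + #(X \ S) ≤ #J := by
  have hfin : {S | S ⊆ X ∧ InducedIndep f S}.Finite :=
    X.powerset.finite_toSet.subset fun S hS => by simpa using hS.1
  obtain ⟨J, hIJ, hJ⟩ := hfin.exists_le_maximal ⟨hIX, hI⟩
  obtain ⟨T, hTJ, hT, hins⟩ := exists_tight_forall_insert_le hf hmono hf₀ hJ
  obtain ⟨hJX, hJind⟩ := hJ.prop
  refine ⟨J, hIJ, hJX, hJind, T ∪ X \ J, union_subset (hTJ.trans hJX) sdiff_subset, ?_⟩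
  have hle := hf.union_le_of_forall_insert_le hmono hins
  have hsdiff : X \ (T ∪ X \ J) ⊆ J \ T := by
    intro e
    simp only [mem_sdiff, mem_union]
    tauto
  have hcard := card_le_card hsdiff
  have hcard' := card_sdiff_add_card_eq_card hTJ
  omega

/-- Rado's theorem for `S ↦ f S + d`, with the deficiency `d = #(E.image c) - q`, gives a rainbow
set of representatives of all colours, in which a maximal independent set has size at least `q`. -/
theorem InducedIndep.exists_injOn_le_card [DecidableEq κ] {f : Finset α → ℕ} (hf : IsSubmodular f)
    (hmono : Monotone f) (hf₀ : f ∅ = 0) {E : Finset α} {c : α → κ} {q : ℕ}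
    (hE : ∀ K ⊆ E.image c, #K + q ≤ f {e ∈ E | c e ∈ K} + #(E.image c)) :
    ∃ I ⊆ E, InducedIndep f I ∧ Set.InjOn c I ∧ q ≤ #I := by
  have hq : q ≤ #(E.image c) := by simpa [hf₀] using hE ∅ (empty_subset _)
  obtain ⟨X, hXE, hXc, hXinj, hX⟩ := exists_injOn_forall_card_le
    (hf.add_const (#(E.image c) - q)) (fun S T hST => Nat.add_le_add_right (hmono hST) _)
    (c := c) fun K hK => by
      have hKq := hE K hK
      omega
  obtain ⟨I, -, hIX, hI, S, hSX, hS⟩ := InducedIndep.exists_superset_rank_le hf hmono hf₀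
    (I := ∅) (fun S hS => by simp [subset_empty.1 hS]) (empty_subset X)
  refine ⟨I, hIX.trans hXE, hI, hXinj.mono (coe_subset.2 hIX), ?_⟩
  have hXcard : #X = #(E.image c) := by rw [← hXc, card_image_of_injOn hXinj]
  have hScard := hX S hSX
  have hsdiff := card_sdiff_add_card_eq_card hSX
  omega

end Submodular

section MatroidRank

variable {α ι κ : Type*} [DecidableEq α]

/-- Rank functions of finitary matroids, given on finite sets by the rank axioms. This is the
`Finset`-indexed, `ℕ`-valued counterpart of `Matroid.eRk`. A finite set `S` is independent when
`r S = #S`. -/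
structure IsMatroidRank (r : Finset α → ℕ) : Prop where
  monotone : Monotone r
  submodular : IsSubmodular r
  card_le (S : Finset α) : r S ≤ #S

namespace IsMatroidRank

variable {r : Finset α → ℕ} {A B : Finset α} {e : α}

theorem insert_le (hr : IsMatroidRank r) (e : α) (S : Finset α) : r (insert e S) ≤ r S + 1 := by
  have hsub := hr.submodular {e} S
  have hle := hr.card_le {e}
  rw [singleton_union] at hsub
  rw [card_singleton] at hle
  omega

theorem eq_card_of_subset (hr : IsMatroidRank r) (hAB : A ⊆ B) (hB : r B = #B) : r A = #A := by
  have hsub := hr.submodular A (B \ A)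
  rw [union_sdiff_of_subset hAB] at hsub
  have hle := hr.card_le (B \ A)
  have hle' := hr.card_le A
  have hcard := card_sdiff_add_card_eq_card hAB
  omega

/-- The exchanged element `g` is taken from the fundamental circuit of `e` with respect to `B`,
which is `e` together with a minimal set `C ⊆ B` spanning `e`. -/
theorem exists_symmetric_exchange (hr : IsMatroidRank r) (hA : r A = #A) (hB : r B = #B)
    (he : e ∈ A) (heB : r (insert e B) ≤ r B) :
    ∃ g ∈ B, r (insert g (A.erase e)) = #A ∧ r (insert e (B.erase g)) = #B := by
  obtain ⟨C, hCB, hC, hmin⟩ := exists_minimal_le_of_wellFoundedLT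
    (fun C => r (insert e C) ≤ r C) B heB
  have hAe := hr.eq_card_of_subset (erase_subset e A) hA
  have hcardA := card_erase_add_one he
  obtain ⟨g, hgC, hg⟩ : ∃ g ∈ C, r (A.erase e) < r (insert g (A.erase e)) := by
    by_contra! hle
    have hunion := hr.submodular.union_le_of_forall_insert_le hr.monotone hle
    have hinsert := hr.submodular.insert_le_of_subset hr.monotone
      (subset_union_right (s₁ := A.erase e)) hC
    have hAle : r A ≤ r (insert e (A.erase e ∪ C)) := hr.monotone <| by
      rw [← insert_union, insert_erase he]
      exact subset_union_left
    omega
  have hgB : g ∈ B := hCB hgC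
  refine ⟨g, hgB, ?_, ?_⟩
  · have hle := hr.insert_le g (A.erase e)
    omega
  · have hspan : r (insert g (insert e (C.erase g))) ≤ r (insert e (C.erase g)) := by
      have hlt : r (C.erase g) < r (insert e (C.erase g)) := by
        by_contra! hle
        exact notMem_erase g C (hmin hle (erase_subset g C) hgC)
      have hins := hr.insert_le g (C.erase g)
      rw [insert_erase hgC] at hins
      rw [insert_comm, insert_erase hgC]
      omega
    have hspanB := hr.submodular.insert_le_of_subset hr.monotone
      (insert_subset_insert e (erase_subset_erase g hCB)) hspan
    rw [insert_comm, insert_erase hgB] at hspanB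
    have hBle : r B ≤ r (insert e B) := hr.monotone (subset_insert e B)
    have hle := hr.insert_le e (B.erase g)
    have hBg := hr.eq_card_of_subset (erase_subset g B) hB
    have hcardB := card_erase_add_one hgB
    omega

end IsMatroidRank

section DirectSum

variable [Fintype ι] {r : ι → Finset α → ℕ}

/-- The rank function of the direct sum, on `α × ι`, of the matroids with rank functions `r i`. -/
noncomputable def directSumRank (r : ι → Finset α → ℕ) (S : Finset (α × ι)) : ℕ :=
  ∑ i, r i (S.preimage (·, i) (Prod.mk_left_injective i).injOn)

omit [DecidableEq α] in
theorem monotone_directSumRank (hr : ∀ i, Monotone (r i)) : Monotone (directSumRank r) :=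
  fun _ _ hST => sum_le_sum fun i _ => hr i (monotone_preimage (Prod.mk_left_injective i) hST)

theorem isSubmodular_directSumRank [DecidableEq ι] (hr : ∀ i, IsSubmodular (r i)) :
    IsSubmodular (directSumRank r) := fun S T => by
  simp only [directSumRank, ← sum_add_distrib]
  refine sum_le_sum fun i _ => ?_
  have hinj (U : Finset (α × ι)) : Set.InjOn (·, i) ((·, i) ⁻¹' (U : Set (α × ι))) :=
    (Prod.mk_left_injective i).injOn
  simpa only [preimage_union, preimage_inter (hinj S) (hinj T)] using hr i _ _

/-- A choice of `φ` is a transversal of the sets `{e} × ι`, `e ∈ J`, independent in the direct sum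
over `ι` of the matroids with rank functions `r i`; Rado's theorem provides one. -/
theorem InducedIndep.exists_fiber_indep [DecidableEq ι] [Nonempty ι]
    (hr : ∀ i, IsMatroidRank (r i)) {J : Finset α} (hJ : InducedIndep (fun S => ∑ i, r i S) J) :
    ∃ φ : α → ι, ∀ i, r i {e ∈ J | φ e = i} = #{e ∈ J | φ e = i} := by
  obtain ⟨x, hx, hcard⟩ := exists_transversal_of_forall_card_le_biUnion
    (isSubmodular_directSumRank fun i => (hr i).submodular)
    (monotone_directSumRank fun i => (hr i).monotone)
    (A := fun e : J => {e.1} ×ˢ univ) (fun e => by simp) fun K => by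
      have hslice (i : ι) : (K.biUnion fun e : J => {e.1} ×ˢ univ).preimage (·, i)
          (Prod.mk_left_injective i).injOn = K.map (Function.Embedding.subtype _) := by
        ext e
        simp [eq_comm]
      simp only [directSumRank, hslice]
      exact (card_map _).symm.trans_le (hJ _ (map_subtype_subset K))
  have hx₁ (e : J) : (x e).1 = e := mem_singleton.1 (mem_product.1 (hx e)).1
  obtain ⟨φ, hφ⟩ : ∃ φ : α → ι, ∀ e : J, φ e = (x e).2 :=
    ⟨Function.extend Subtype.val (fun e => (x e).2) fun _ => Classical.arbitrary ι,
      Subtype.val_injective.extend_apply _ _⟩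
  refine ⟨φ, fun i => ((hr i).card_le _).antisymm ?_⟩
  set T : Finset α := {e ∈ J | φ e = i}
  have hslice (j : ι) : ((T.subtype (· ∈ J)).image x).preimage (·, j)
      (Prod.mk_left_injective j).injOn = if j = i then T else ∅ := by
    ext e
    simp only [mem_preimage, mem_image, mem_subtype, mem_filter, SetLike.coe_mem, true_and,
      Prod.ext_iff, hx₁, ← hφ, Subtype.exists, exists_and_left, exists_prop, ↓existsAndEq, T]
    grind
  have hempty (j : ι) : r j ∅ = 0 := Nat.le_zero.1 ((hr j).card_le ∅)
  have hTJ : #(T.subtype (· ∈ J)) = #T := by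
    rw [card_subtype, filter_true_of_mem fun e he => (mem_filter.1 he).1]
  simpa [directSumRank, hslice, hTJ, apply_ite, hempty] using hcard (T.subtype (· ∈ J))

end DirectSum

section RainbowBases

variable [DecidableEq ι] [DecidableEq κ] {J : Finset α} {φ : α → ι} {c : α → κ} {ρ : ℕ}

omit [DecidableEq α] in
theorem exists_disjoint_image_fiber_of_not_injOn [Fintype ι] (hρ : ∀ i, #{e ∈ J | φ e = i} ≤ ρ)
    (hJ : Fintype.card ι * (ρ - 1) < #(J.image c)) {i : ι}
    (hi : ¬ Set.InjOn c ({e ∈ J | φ e = i} : Finset α)) :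
    ∃ j, Disjoint ({e ∈ J | φ e = i}.image c) ({e ∈ J | φ e = j}.image c) := by
  by_contra! hmeet
  let T (j : ι) : Finset α := {e ∈ J | φ e = j}
  let B (j : ι) : Finset κ := if j = i then (T i).image c else (T j).image c \ (T i).image c
  have hB (j : ι) : #(B j) ≤ ρ - 1 := by
    by_cases hj : j = i
    · have hne : #((T i).image c) ≠ #(T i) := fun heq => hi (card_image_iff.1 heq)
      have hle : #((T i).image c) ≤ #(T i) := card_image_le
      have hTi : #(T i) ≤ ρ := hρ i
      simp only [B, hj, if_true]
      omega
    · have hinter : 0 < #((T i).image c ∩ (T j).image c) :=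
        card_pos.2 (not_disjoint_iff_nonempty_inter.1 (hmeet j))
      have hsplit := card_sdiff_add_card_inter ((T j).image c) ((T i).image c)
      rw [inter_comm] at hsplit
      have hTj : #((T j).image c) ≤ ρ := card_image_le.trans (hρ j)
      simp only [B, hj, if_false]
      omega
  have hcover : J.image c ⊆ univ.biUnion B := by
    refine image_subset_iff.2 fun e he => ?_
    by_cases hei : c e ∈ (T i).image c
    · exact mem_biUnion.2 ⟨i, mem_univ i, by simpa only [B, if_true] using hei⟩
    · have hφ : φ e ≠ i := fun hφ => hei (mem_image_of_mem c (mem_filter.2 ⟨he, hφ⟩))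
      refine mem_biUnion.2 ⟨φ e, mem_univ _, ?_⟩
      simp only [B, hφ, if_false]
      exact mem_sdiff.2 ⟨mem_image_of_mem c (mem_filter.2 ⟨he, rfl⟩), hei⟩
  exact hJ.not_ge ((card_le_card hcover).trans (card_biUnion_le_card_mul _ _ _ fun j _ => hB j))

theorem filter_comp_swap {e g : α} (he : e ∈ J) (hg : g ∈ J) (hne : φ g ≠ φ e) (k : ι) :
    {x ∈ J | (φ ∘ Equiv.swap e g) x = k} =
      if k = φ e then insert g ({x ∈ J | φ x = k}.erase e)
      else if k = φ g then insert e ({x ∈ J | φ x = k}.erase g)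
      else {x ∈ J | φ x = k} := by
  ext x
  simp only [Function.comp_apply, Equiv.swap_apply_def]
  grind

/-- `φ` colours `J` in such a way that each colour class is a basis of the matroid of rank `ρ` with
rank function `r`. -/
def IsBaseColoring (r : Finset α → ℕ) (ρ : ℕ) (J : Finset α) (φ : α → ι) : Prop :=
  ∀ i, #{e ∈ J | φ e = i} = ρ ∧ r {e ∈ J | φ e = i} = ρ

theorem card_image_lt_card_image_insert_erase {T : Finset α} {e e' g : α} (he' : e' ∈ T)
    (hne : e ≠ e') (hc : c e = c e') (hg : c g ∉ T.image c) :
    #(T.image c) < #((insert g (T.erase e)).image c) := by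
  have hsub : T.image c ⊆ (T.erase e).image c := image_subset_iff.2 fun x hx => by
    by_cases hxe : x = e
    · exact mem_image.2 ⟨e', mem_erase.2 ⟨hne.symm, he'⟩, hxe ▸ hc.symm⟩
    · exact mem_image_of_mem c (mem_erase.2 ⟨hxe, hx⟩)
  refine card_lt_card (ssubset_of_subset_not_subset (hsub.trans ?_) fun hle => hg (hle ?_))
  · exact image_subset_image (subset_insert g _)
  · exact mem_image_of_mem c (mem_insert_self g _)

theorem card_image_le_card_image_insert_erase {T : Finset α} {e g : α} (he : c e ∉ T.image c) :
    #(T.image c) ≤ #((insert e (T.erase g)).image c) := by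
  have hsub : T.image c ⊆ insert (c g) ((T.erase g).image c) := by
    rw [← image_insert]
    exact image_subset_image (insert_erase_subset g T)
  rw [image_insert, card_insert_of_notMem fun h => he (image_subset_image (erase_subset g T) h)]
  exact (card_le_card hsub).trans (card_insert_le _ _)

variable {r : Finset α → ℕ}

theorem IsMatroidRank.exists_isBaseColoring [Fintype ι] [Nonempty ι] (hr : IsMatroidRank r)
    (hρ : ∀ S, r S ≤ ρ) (hJ : InducedIndep (fun S => Fintype.card ι * r S) J)
    (hcard : Fintype.card ι * ρ ≤ #J) : ∃ φ : α → ι, IsBaseColoring r ρ J φ := by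
  obtain ⟨φ, hφ⟩ := InducedIndep.exists_fiber_indep (ι := ι) (r := fun _ => r) (fun _ => hr)
    (J := J) (by simpa using hJ)
  have hle (i : ι) : #{e ∈ J | φ e = i} ≤ ρ := (hφ i).symm.trans_le (hρ _)
  have hsum : ∑ i, #{e ∈ J | φ e = i} = ∑ _ : ι, ρ := by
    refine (sum_le_sum fun i _ => hle i).antisymm ?_
    rw [← card_eq_sum_card_fiberwise fun e _ => mem_coe.2 (mem_univ (φ e))]
    simpa using hcard
  have heq := (sum_eq_sum_iff_of_le fun i _ => hle i).1 hsum
  exact ⟨φ, fun i => ⟨heq i (mem_univ i), (hφ i).trans (heq i (mem_univ i))⟩⟩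

/-- The repeated colour of class `i` sits on `e` and `e'`, so exchanging `e` for an element of class
`j` loses no colour in class `i` and gains one. -/
theorem IsBaseColoring.exists_swap [Fintype ι] (hr : IsMatroidRank r) (hρ : ∀ S, r S ≤ ρ)
    (hφ : IsBaseColoring r ρ J φ) {i j : ι}
    (hi : ¬ Set.InjOn c ({e ∈ J | φ e = i} : Finset α))
    (hij : Disjoint ({e ∈ J | φ e = i}.image c) ({e ∈ J | φ e = j}.image c)) :
    ∃ φ' : α → ι, IsBaseColoring r ρ J φ' ∧
      ∑ k, #({e ∈ J | φ e = k}.image c) < ∑ k, #({e ∈ J | φ' e = k}.image c) := by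
  simp only [Set.InjOn, not_forall, mem_coe] at hi
  obtain ⟨e, heT, e', he', hc, hne⟩ := hi
  have hbase (k : ι) : r {x ∈ J | φ x = k} = #{x ∈ J | φ x = k} := (hφ k).2.trans (hφ k).1.symm
  obtain ⟨g, hgT, hrg, hre⟩ := hr.exists_symmetric_exchange (hbase i) (hbase j) heT
    ((hρ _).trans_eq (hφ j).2.symm)
  have hcg : c g ∉ {x ∈ J | φ x = i}.image c := disjoint_right.1 hij (mem_image_of_mem c hgT)
  have hce : c e ∉ {x ∈ J | φ x = j}.image c := disjoint_left.1 hij (mem_image_of_mem c heT)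
  obtain ⟨heJ, rfl⟩ := mem_filter.1 heT
  obtain ⟨hgJ, rfl⟩ := mem_filter.1 hgT
  have hge : φ g ≠ φ e := fun heq =>
    hcg (mem_image_of_mem c (mem_filter.2 ⟨hgJ, heq⟩))
  rw [(hφ _).1] at hrg hre
  refine ⟨φ ∘ Equiv.swap e g, fun k => ?_, sum_lt_sum (fun k _ => ?_) ⟨φ e, mem_univ _, ?_⟩⟩
  · have hcard {A : Finset α} {x y : α} (hx : x ∈ A) (hA : #A = ρ)
        (hrank : r (insert y (A.erase x)) = ρ) : #(insert y (A.erase x)) = ρ :=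
      ((card_insert_le _ _).trans_eq ((card_erase_add_one hx).trans hA)).antisymm
        (hrank.symm.trans_le (hr.card_le _))
    rw [filter_comp_swap heJ hgJ hge]
    split_ifs with hk hk'
    · subst hk
      exact ⟨hcard heT (hφ _).1 hrg, hrg⟩
    · subst hk'
      exact ⟨hcard hgT (hφ _).1 hre, hre⟩
    · exact hφ k
  · rw [filter_comp_swap heJ hgJ hge]
    split_ifs with hk hk'
    · subst hk
      exact (card_image_lt_card_image_insert_erase he' hne hc hcg).le
    · subst hk'
      exact card_image_le_card_image_insert_erase hce
    · exact le_rfl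
  · rw [filter_comp_swap heJ hgJ hge, if_pos rfl]
    exact card_image_lt_card_image_insert_erase he' hne hc hcg

theorem IsBaseColoring.exists_forall_injOn [Fintype ι] (hr : IsMatroidRank r) (hρ : ∀ S, r S ≤ ρ)
    (hφ : IsBaseColoring r ρ J φ) (hJ : Fintype.card ι * (ρ - 1) < #(J.image c)) :
    ∃ φ' : α → ι, IsBaseColoring r ρ J φ' ∧
      ∀ i, Set.InjOn c ({e ∈ J | φ' e = i} : Finset α) := by
  have hfin : ((fun ψ : α → ι => ∑ k, #({e ∈ J | ψ e = k}.image c)) ''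
      {ψ | IsBaseColoring r ρ J ψ}).Finite := by
    refine (Set.finite_Iic (∑ _ : ι, #J)).subset ?_
    rintro _ ⟨ψ, -, rfl⟩
    exact sum_le_sum fun k _ => card_image_le.trans (card_filter_le _ _)
  obtain ⟨φ', hφ', hmax⟩ := Set.Finite.exists_maximalFor' _ _ hfin ⟨φ, hφ⟩
  refine ⟨φ', hφ', ?_⟩
  by_contra! hinj
  obtain ⟨i, hi⟩ := hinj
  obtain ⟨j, hij⟩ := exists_disjoint_image_fiber_of_not_injOn (fun i => (hφ' i).1.le) hJ hi
  obtain ⟨ψ, hψ, hlt⟩ := hφ'.exists_swap hr hρ hi hij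
  exact hlt.not_ge (hmax hψ hlt.le)

end RainbowBases

end MatroidRank

section ConnectedComponents

variable {V : Type*}

/-- The kernel of the Laplacian consists of the functions that are constant on components, so its
dimension counts components, and the dimension formula for the kernels of `G` and `H` applies. -/
theorem card_connectedComponent_add_le [Finite V] (G H : SimpleGraph V) :
    Nat.card G.ConnectedComponent + Nat.card H.ConnectedComponent ≤
      Nat.card (G ⊔ H).ConnectedComponent + Nat.card (G ⊓ H).ConnectedComponent := by
  have := Fintype.ofFinite V
  let ker (K : SimpleGraph V) : Submodule ℝ (V → ℝ) := (K.lapMatrix ℝ).toLin'.ker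
  have hcard (K : SimpleGraph V) : Nat.card K.ConnectedComponent = Module.finrank ℝ (ker K) := by
    rw [Nat.card_eq_fintype_card, K.card_connectedComponent_eq_finrank_ker_toLin'_lapMatrix]
  have hmem (K : SimpleGraph V) (x : V → ℝ) : x ∈ ker K ↔ ∀ i j, K.Adj i j → x i = x j := by
    rw [LinearMap.mem_ker, Matrix.toLin'_apply, K.lapMatrix_mulVec_eq_zero_iff_forall_adj]
  have hinf : ker G ⊓ ker H = ker (G ⊔ H) := by
    ext x
    simp only [Submodule.mem_inf, hmem, SimpleGraph.sup_adj]
    grind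
  have hsup : ker G ⊔ ker H ≤ ker (G ⊓ H) :=
    sup_le (fun x hx => (hmem _ x).2 fun i j hij => (hmem _ x).1 hx i j hij.1)
      fun x hx => (hmem _ x).2 fun i j hij => (hmem _ x).1 hx i j hij.2
  have hdim := Submodule.finrank_sup_add_finrank_inf_eq (ker G) (ker H)
  have hle := Submodule.finrank_mono hsup
  rw [hinf] at hdim
  simp only [hcard]
  omega

variable [Fintype V]

theorem card_image_le_card_connectedComponent {β : Type*} [DecidableEq β] {G : SimpleGraph V}
    {f : V → β} (hf : ∀ a b, G.Adj a b → f a = f b) :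
    #(univ.image f) ≤ Nat.card G.ConnectedComponent := by
  have hreach {a b : V} (w : G.Walk a b) : f a = f b := by
    induction w with
    | nil => rfl
    | cons hadj _ ih => exact (hf _ _ hadj).trans ih
  have hsub : univ.image f ⊆
      univ.image (SimpleGraph.ConnectedComponent.lift f fun _ _ w _ => hreach w) :=
    image_subset_iff.2 fun v _ => mem_image.2 ⟨G.connectedComponentMk v, mem_univ _, rfl⟩
  rw [Nat.card_eq_fintype_card]
  exact (card_le_card hsub).trans card_image_le

theorem card_parts_le_card_connectedComponent {G : SimpleGraph V}
    {P : Finpartition (univ : Finset V)} (hP : ∀ a b, G.Adj a b → P.part a = P.part b) :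
    #P.parts ≤ Nat.card G.ConnectedComponent := by
  refine (card_le_card fun p hp => ?_).trans (card_image_le_card_connectedComponent hP)
  obtain ⟨v, hv⟩ := P.nonempty_of_mem_parts hp
  exact mem_image.2 ⟨v, mem_univ v, P.part_eq_of_mem hp hv⟩

theorem exists_finpartition_card_connectedComponent_le (G : SimpleGraph V) :
    ∃ P : Finpartition (univ : Finset V), Nat.card G.ConnectedComponent ≤ #P.parts ∧
      ∀ a b, G.Adj a b → P.part a = P.part b := by
  let P := Finpartition.ofSetoid G.reachableSetoid
  have hP {a b : V} : P.part a = P.part b ↔ G.Reachable a b := by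
    rw [← P.mem_part_iff_part_eq_part (mem_univ a) (mem_univ b),
      Finpartition.mem_part_ofSetoid_iff_rel]
    exact SimpleGraph.reachable_comm
  refine ⟨P, ?_, fun a b hab => hP.2 hab.reachable⟩
  have hinj : Function.Injective fun C : G.ConnectedComponent =>
      (⟨P.part C.out, P.part_mem.2 (mem_univ _)⟩ : P.parts) := fun C D hCD => by
    rw [← Quot.out_eq C, ← Quot.out_eq D]
    exact SimpleGraph.ConnectedComponent.sound (hP.1 (congrArg Subtype.val hCD))
  simpa using Nat.card_le_card_of_injective _ hinj

end ConnectedComponents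

section GraphicRank

variable {V : Type*} [Fintype V]

/-- The rank function of the cycle matroid of the complete graph on `V`: the number of vertices
minus the number of components of `(V, S)`. Loops `s(v, v)` have rank `0`. -/
noncomputable def graphicRank (S : Finset (Sym2 V)) : ℕ :=
  Fintype.card V - Nat.card (SimpleGraph.fromEdgeSet (S : Set (Sym2 V))).ConnectedComponent

theorem graphicRank_add_card_connectedComponent (S : Finset (Sym2 V)) :
    graphicRank S + Nat.card (SimpleGraph.fromEdgeSet (S : Set (Sym2 V))).ConnectedComponent =
      Fintype.card V := by
  refine Nat.sub_add_cancel ?_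
  rw [← Nat.card_eq_fintype_card]
  exact Nat.card_le_card_of_surjective _ Quot.mk_surjective

theorem monotone_graphicRank : Monotone (graphicRank : Finset (Sym2 V) → ℕ) := fun _ _ hST =>
  Nat.sub_le_sub_left (SimpleGraph.ConnectedComponent.card_le_card_of_le
    (SimpleGraph.fromEdgeSet_mono (coe_subset.2 hST))) _

theorem isSubmodular_graphicRank : IsSubmodular (graphicRank : Finset (Sym2 V) → ℕ) :=
  fun S T => by
  have hST := card_connectedComponent_add_le (SimpleGraph.fromEdgeSet (S : Set (Sym2 V)))
    (SimpleGraph.fromEdgeSet T)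
  rw [← SimpleGraph.fromEdgeSet_union, ← SimpleGraph.fromEdgeSet_inter, ← coe_union,
    ← coe_inter] at hST
  have hS := graphicRank_add_card_connectedComponent S
  have hT := graphicRank_add_card_connectedComponent T
  have hunion := graphicRank_add_card_connectedComponent (S ∪ T)
  have hinter := graphicRank_add_card_connectedComponent (S ∩ T)
  omega

theorem graphicRank_singleton_le (e : Sym2 V) : graphicRank {e} ≤ 1 := by
  induction e with
  | _ a b =>
    have hf : ∀ v w, (SimpleGraph.fromEdgeSet (({s(a, b)} : Finset (Sym2 V)) : Set _)).Adj v w →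
        (if v = a then b else v) = if w = a then b else w := by
      intro v w
      simp only [SimpleGraph.fromEdgeSet_adj, coe_singleton, Set.mem_singleton_iff, Sym2.eq_iff]
      grind
    have hsub : univ.erase a ⊆ univ.image fun v => if v = a then b else v := fun v hv =>
      mem_image.2 ⟨v, mem_univ v, if_neg (ne_of_mem_erase hv)⟩
    have hle := (card_le_card hsub).trans (card_image_le_card_connectedComponent hf)
    rw [card_erase_of_mem (mem_univ a), card_univ] at hle
    have hcard := graphicRank_add_card_connectedComponent {s(a, b)}
    omega

theorem graphicRank_empty : graphicRank (∅ : Finset (Sym2 V)) = 0 := by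
  have hle : #((univ : Finset V).image id) ≤
      Nat.card (SimpleGraph.fromEdgeSet ((∅ : Finset (Sym2 V)) : Set _)).ConnectedComponent :=
    card_image_le_card_connectedComponent (by simp)
  rw [image_id, card_univ] at hle
  exact Nat.sub_eq_zero_of_le hle

theorem isMatroidRank_graphicRank : IsMatroidRank (graphicRank : Finset (Sym2 V) → ℕ) where
  monotone := monotone_graphicRank
  submodular := isSubmodular_graphicRank
  card_le S := by
    induction S using Finset.induction_on with
    | empty => exact graphicRank_empty.le
    | insert e S he ih =>
      have hsub := isSubmodular_graphicRank {e} S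
      have hle := graphicRank_singleton_le e
      rw [singleton_union] at hsub
      rw [card_insert_of_notMem he]
      omega

theorem graphicRank_add_one_le [Nonempty V] (S : Finset (Sym2 V)) :
    graphicRank S + 1 ≤ Fintype.card V := by
  have hpos : 0 < Nat.card (SimpleGraph.fromEdgeSet (S : Set (Sym2 V))).ConnectedComponent :=
    Nat.card_pos
  have hcard := graphicRank_add_card_connectedComponent S
  omega

theorem graphicRank_add_card_parts_le {S : Finset (Sym2 V)} {P : Finpartition (univ : Finset V)}
    (hP : ∀ a b, s(a, b) ∈ S → P.part a = P.part b) :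
    graphicRank S + #P.parts ≤ Fintype.card V := by
  have hle := card_parts_le_card_connectedComponent
    (G := SimpleGraph.fromEdgeSet (S : Set (Sym2 V))) (P := P) fun a b hab =>
      hP a b (mem_coe.1 ((SimpleGraph.fromEdgeSet_adj _).1 hab).1)
  have hcard := graphicRank_add_card_connectedComponent S
  omega

theorem exists_finpartition_card_le_graphicRank_add (S : Finset (Sym2 V)) :
    ∃ P : Finpartition (univ : Finset V), Fintype.card V ≤ graphicRank S + #P.parts ∧
      ∀ a b, s(a, b) ∈ S → P.part a = P.part b := by
  obtain ⟨P, hcomp, hP⟩ := exists_finpartition_card_connectedComponent_le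
    (SimpleGraph.fromEdgeSet (S : Set (Sym2 V)))
  have hcard := graphicRank_add_card_connectedComponent S
  refine ⟨P, by omega, fun a b hab => ?_⟩
  obtain rfl | hne := eq_or_ne a b
  · rfl
  · exact hP a b ((SimpleGraph.fromEdgeSet_adj _).2 ⟨hab, hne⟩)

theorem graphicRank_edgeFinset_of_connected {G : SimpleGraph V} [Fintype G.edgeSet]
    (hG : G.Connected) : graphicRank G.edgeFinset + 1 = Fintype.card V := by
  have := hG.preconnected.subsingleton_connectedComponent
  have := hG.nonempty
  have hcard := graphicRank_add_card_connectedComponent G.edgeFinset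
  rwa [SimpleGraph.coe_edgeFinset, SimpleGraph.fromEdgeSet_edgeSet, Nat.card_unique] at hcard

theorem isTree_fromEdgeSet_of_graphicRank {S : Finset (Sym2 V)} (hdiag : ∀ e ∈ S, ¬ e.IsDiag)
    (hrank : graphicRank S + 1 = Fintype.card V) (hcard : #S + 1 = Fintype.card V) :
    (SimpleGraph.fromEdgeSet (S : Set (Sym2 V))).IsTree := by
  have hcomp := graphicRank_add_card_connectedComponent S
  have hone : Nat.card (SimpleGraph.fromEdgeSet (S : Set (Sym2 V))).ConnectedComponent = 1 := by
    omega
  obtain ⟨hsub, ⟨C⟩⟩ := Nat.card_eq_one_iff_unique.1 hone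
  have hedge : (SimpleGraph.fromEdgeSet (S : Set (Sym2 V))).edgeSet = S := by
    rw [SimpleGraph.edgeSet_fromEdgeSet, sdiff_eq_left]
    exact Set.disjoint_left.2 hdiag
  have hconn : (SimpleGraph.fromEdgeSet (S : Set (Sym2 V))).Connected :=
    { preconnected := fun _ _ => SimpleGraph.ConnectedComponent.exact (Subsingleton.elim _ _)
      nonempty := ⟨C.out⟩ }
  rw [SimpleGraph.isTree_iff_connected_and_card, hedge, Nat.card_eq_fintype_card,
    Nat.card_eq_fintype_card]
  exact ⟨hconn, by simpa using hcard⟩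

end GraphicRank

section EdgesCrossing

variable {V : Type} [Fintype V] {G : SimpleGraph V} {P : Finpartition (univ : Finset V)} {a b : V}

theorem exists_mem_parts_forall_mem_iff :
    (∃ p ∈ P.parts, ∀ v ∈ s(a, b), v ∈ p) ↔ P.part a = P.part b := by
  simp only [Sym2.mem_iff, forall_eq_or_imp, forall_eq]
  rw [← P.mem_part_iff_part_eq_part (mem_univ a) (mem_univ b), P.mem_part_iff_exists]

theorem mem_edgesNonCrossing :
    s(a, b) ∈ edgesNonCrossing G P ↔ G.Adj a b ∧ P.part a = P.part b := by
  rw [edgesNonCrossing, mem_filter, exists_mem_parts_forall_mem_iff, SimpleGraph.mem_edgeFinset,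
    SimpleGraph.mem_edgeSet]

theorem edgesCrossing_eq_sdiff : edgesCrossing G P = G.edgeFinset \ edgesNonCrossing G P :=
  filter_not _ _

theorem edgesNonCrossing_subset : edgesNonCrossing G P ⊆ G.edgeFinset :=
  filter_subset _ _

theorem edgesCrossing_subset : edgesCrossing G P ⊆ G.edgeFinset :=
  filter_subset _ _

theorem edgesCrossing_mono {H : SimpleGraph V} (hHG : H ≤ G) :
    edgesCrossing H P ⊆ edgesCrossing G P :=
  filter_subset_filter _ (SimpleGraph.edgeFinset_mono hHG)

theorem card_parts_le_card_edgesCrossing_add_one (hG : G.Connected)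
    (P : Finpartition (univ : Finset V)) : #P.parts ≤ #(edgesCrossing G P) + 1 := by
  have hfull := graphicRank_edgeFinset_of_connected hG
  have hnon : graphicRank (edgesNonCrossing G P) + #P.parts ≤ Fintype.card V :=
    graphicRank_add_card_parts_le fun a b hab => (mem_edgesNonCrossing.1 hab).2
  have hsub := isSubmodular_graphicRank (edgesNonCrossing G P) (edgesCrossing G P)
  have hcross := isMatroidRank_graphicRank.card_le (edgesCrossing G P)
  rw [edgesCrossing_eq_sdiff, union_sdiff_of_subset edgesNonCrossing_subset,
    ← edgesCrossing_eq_sdiff] at hsub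
  omega

theorem exists_finpartition_subset_edgesNonCrossing {S : Finset (Sym2 V)}
    (hS : S ⊆ G.edgeFinset) : ∃ P : Finpartition (univ : Finset V),
      Fintype.card V ≤ graphicRank S + #P.parts ∧ S ⊆ edgesNonCrossing G P := by
  obtain ⟨P, hcard, hP⟩ := exists_finpartition_card_le_graphicRank_add S
  refine ⟨P, hcard, fun e he => ?_⟩
  induction e with
  | _ a b => exact mem_edgesNonCrossing.2 ⟨SimpleGraph.mem_edgeFinset.1 (hS he), hP a b he⟩

end EdgesCrossing

theorem exists_card_image_eq_card_add_one {α : Type*} {D E : Finset α}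
    (hDE : D ⊂ E) : ∃ c : α → ℕ, #(E.image c) = #D + 1 ∧ ∀ x ∉ D, c x = 0 := by
  let c (x : α) : ℕ := if hx : x ∈ D then D.equivFin ⟨x, hx⟩ + 1 else 0
  refine ⟨c, ?_, fun x hx => dif_neg hx⟩
  obtain ⟨y, hyE, hyD⟩ := exists_of_ssubset hDE
  have himage : E.image c = insert 0 (D.image c) := by
    ext k
    simp only [mem_insert, mem_image]
    constructor
    · rintro ⟨x, -, rfl⟩
      by_cases hx : x ∈ D
      · exact .inr ⟨x, hx, rfl⟩
      · exact .inl (dif_neg hx)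
    · rintro (rfl | ⟨x, hx, rfl⟩)
      · exact ⟨y, hyE, dif_neg hyD⟩
      · exact ⟨x, hDE.1 hx, rfl⟩
  have hinj : Set.InjOn c D := fun x hx y hy hxy => by
    simpa [c, mem_coe.1 hx, mem_coe.1 hy, Fin.val_inj] using hxy
  rw [himage, card_insert_of_notMem, card_image_of_injOn hinj]
  simp only [mem_image, not_exists, not_and]
  intro x hx
  simp [c, hx]

section AntiRamsey

variable {V : Type} [Fintype V] {G : SimpleGraph V} {c : Sym2 V → ℕ} {t : ℕ}
  {P : Finpartition (univ : Finset V)}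

theorem card_image_le_antiRamsey (hc : ¬ HasRainbowSpanningTrees G c t) :
    #(G.edgeFinset.image c) ≤ antiRamsey G t := by
  refine le_csSup ⟨#G.edgeFinset, ?_⟩ ⟨c, rfl, hc⟩
  rintro _ ⟨c, rfl, -⟩
  exact card_image_le

theorem le_maxNonCross3 (hP : 3 ≤ #P.parts) :
    #(edgesNonCrossing G P) + t * (#P.parts - 2) ≤ maxNonCross3 G t := by
  refine le_csSup ⟨#G.edgeFinset + t * Fintype.card V, ?_⟩ ⟨P, hP, rfl⟩
  rintro _ ⟨P, -, rfl⟩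
  exact add_le_add (card_le_card edgesNonCrossing_subset)
    (Nat.mul_le_mul_left t ((Nat.sub_le _ 2).trans P.card_parts_le_card))

theorem card_parts_le_card_edgesCrossing_inter_add_two {T : SimpleGraph V} (hT : T.Connected)
    (hinj : Set.InjOn c T.edgeSet) {S : Finset (Sym2 V)} {k : ℕ}
    (hS : ∀ e ∈ edgesCrossing T P \ S, c e = k) :
    #P.parts ≤ #(edgesCrossing T P ∩ S) + 2 := by
  have hone : #(edgesCrossing T P \ S) ≤ 1 := card_le_one.2 fun e he f hf =>
    hinj (SimpleGraph.mem_edgeFinset.1 (edgesCrossing_subset (mem_sdiff.1 he).1))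
      (SimpleGraph.mem_edgeFinset.1 (edgesCrossing_subset (mem_sdiff.1 hf).1))
      ((hS e he).trans (hS f hf).symm)
  have hparts := card_parts_le_card_edgesCrossing_add_one hT P
  have hsplit := card_sdiff_add_card_inter (edgesCrossing T P) S
  omega

theorem not_hasRainbowSpanningTrees_of_card_lt {S : Finset (Sym2 V)}
    (hS : #S < t * (#P.parts - 2)) {k : ℕ} (hc : ∀ e ∈ edgesCrossing G P \ S, c e = k) :
    ¬ HasRainbowSpanningTrees G c t := by
  rintro ⟨T, hTG, hT, hinj, hdisj⟩
  have hle (i : Fin t) : #P.parts - 2 ≤ #(edgesCrossing (T i) P ∩ S) :=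
    Nat.sub_le_of_le_add <| card_parts_le_card_edgesCrossing_inter_add_two (hT i).connected
      (hinj i) fun e he => hc e (sdiff_subset_sdiff (edgesCrossing_mono (hTG i)) subset_rfl he)
  have hdisjS : ∀ i ∈ univ, ∀ j ∈ univ, i ≠ j →
      Disjoint (edgesCrossing (T i) P ∩ S) (edgesCrossing (T j) P ∩ S) := fun i _ j _ hij =>
    ((SimpleGraph.disjoint_edgeFinset.2 (SimpleGraph.disjoint_edgeSet.1 (hdisj i j hij))).mono
      edgesCrossing_subset edgesCrossing_subset).mono inter_subset_left inter_subset_left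
  have hsum : ∑ i, #(edgesCrossing (T i) P ∩ S) ≤ #S := by
    rw [← card_biUnion hdisjS]
    exact card_le_card (biUnion_subset.2 fun i _ => inter_subset_right)
  have hmul := sum_le_sum fun i (_ : i ∈ univ) => hle i
  rw [sum_const, card_univ, Fintype.card_fin, smul_eq_mul] at hmul
  omega

theorem card_edgesNonCrossing_add_le_antiRamsey (ht : 0 < t) (hP : 3 ≤ #P.parts)
    (hcross : t * (#P.parts - 1) ≤ #(edgesCrossing G P)) :
    #(edgesNonCrossing G P) + t * (#P.parts - 2) ≤ antiRamsey G t := by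
  have hlt : t * (#P.parts - 2) < t * (#P.parts - 1) := Nat.mul_lt_mul_of_pos_left (by omega) ht
  have hpos : 0 < t * (#P.parts - 2) := Nat.mul_pos ht (by omega)
  obtain ⟨S, hSP, hS⟩ := exists_subset_card_eq
    (show t * (#P.parts - 2) - 1 ≤ #(edgesCrossing G P) by omega)
  have hdisj : Disjoint (edgesNonCrossing G P) S := by
    rw [edgesCrossing_eq_sdiff] at hSP
    exact disjoint_sdiff.mono_right hSP
  have hcard := card_union_of_disjoint hdisj
  have hssub : edgesNonCrossing G P ∪ S ⊂ G.edgeFinset := by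
    refine (union_subset edgesNonCrossing_subset
      (hSP.trans edgesCrossing_subset)).ssubset_of_ne fun heq => ?_
    have hE := card_sdiff_add_card_eq_card (edgesNonCrossing_subset (G := G) (P := P))
    rw [← edgesCrossing_eq_sdiff, ← heq] at hE
    omega
  obtain ⟨c, hc, hzero⟩ := exists_card_image_eq_card_add_one hssub
  have hother : ∀ e ∈ edgesCrossing G P \ S, c e = 0 := fun e he => by
    rw [edgesCrossing_eq_sdiff, mem_sdiff, mem_sdiff] at he
    exact hzero e (notMem_union.2 ⟨he.1.2, he.2⟩)
  have hSlt : #S < t * (#P.parts - 2) := by omega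
  have hle := card_image_le_antiRamsey (not_hasRainbowSpanningTrees_of_card_lt hSlt hother)
  omega

theorem card_add_le_mul_graphicRank_add (ht : 0 < t) (hV : 2 ≤ Fintype.card V)
    (hcross : ∀ P : Finpartition (univ : Finset V), t * (#P.parts - 1) ≤ #(edgesCrossing G P))
    (hc : ∀ P : Finpartition (univ : Finset V), 3 ≤ #P.parts →
      #(edgesNonCrossing G P) + t * (#P.parts - 2) < #(G.edgeFinset.image c))
    {K : Finset ℕ} (hK : K ⊆ G.edgeFinset.image c) :
    #K + (t * (Fintype.card V - 2) + 1) ≤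
      t * graphicRank {e ∈ G.edgeFinset | c e ∈ K} + #(G.edgeFinset.image c) := by
  obtain ⟨P, hV', hP⟩ := exists_finpartition_subset_edgesNonCrossing
    (filter_subset (c · ∈ K) G.edgeFinset)
  obtain hthree | htwo | hone : 3 ≤ #P.parts ∨ #P.parts = 2 ∨ #P.parts ≤ 1 := by omega
  · have hKP : #K ≤ #(edgesNonCrossing G P) := by
      refine (card_le_card fun k hk => ?_).trans ((card_image_le (f := c)).trans (card_le_card hP))
      obtain ⟨e, he, rfl⟩ := mem_image.1 (hK hk)
      exact mem_image_of_mem c (mem_filter.2 ⟨he, hk⟩)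
    have hmul := Nat.mul_le_mul_left t
      (show Fintype.card V - 2 ≤ graphicRank {e ∈ G.edgeFinset | c e ∈ K} + (#P.parts - 2) by omega)
    have hlt := hc P hthree
    rw [mul_add] at hmul
    omega
  · obtain ⟨e, he⟩ : (edgesCrossing G P).Nonempty := card_pos.1 <|
      (Nat.mul_pos ht (by omega : 0 < #P.parts - 1)).trans_le (hcross P)
    rw [edgesCrossing_eq_sdiff, mem_sdiff] at he
    have hlt : #K < #(G.edgeFinset.image c) := card_lt_card <|
      (ssubset_iff_of_subset hK).2 ⟨c e, mem_image_of_mem c he.1, fun heK =>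
        he.2 (hP (mem_filter.2 ⟨he.1, heK⟩))⟩
    have hmul := Nat.mul_le_mul_left t
      (show Fintype.card V - 2 ≤ graphicRank {e ∈ G.edgeFinset | c e ∈ K} by omega)
    omega
  · have hmul := Nat.mul_le_mul_left t
      (show Fintype.card V - 2 + 1 ≤ graphicRank {e ∈ G.edgeFinset | c e ∈ K} by omega)
    have hKle := card_le_card hK
    rw [mul_add] at hmul
    omega

theorem exists_superset_inducedIndep_card_ge
    (hcross : ∀ P : Finpartition (univ : Finset V), t * (#P.parts - 1) ≤ #(edgesCrossing G P))
    {I : Finset (Sym2 V)} (hIG : I ⊆ G.edgeFinset)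
    (hI : InducedIndep (fun S => t * graphicRank S) I) :
    ∃ J, I ⊆ J ∧ J ⊆ G.edgeFinset ∧ InducedIndep (fun S => t * graphicRank S) J ∧
      t * (Fintype.card V - 1) ≤ #J := by
  obtain ⟨J, hIJ, hJG, hJ, S, hSG, hS⟩ := InducedIndep.exists_superset_rank_le
    (isSubmodular_graphicRank.const_mul t) (monotone_graphicRank.const_mul' t)
    (by simp [graphicRank_empty]) hI hIG
  refine ⟨J, hIJ, hJG, hJ, ?_⟩
  obtain ⟨P, hV, hP⟩ := exists_finpartition_subset_edgesNonCrossing hSG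
  have hcut := card_le_card (sdiff_subset_sdiff subset_rfl hP : _ ⊆ G.edgeFinset \ S)
  rw [← edgesCrossing_eq_sdiff] at hcut
  have hPcross := hcross P
  have hmul := Nat.mul_le_mul_left t
    (show Fintype.card V - 1 ≤ graphicRank S + (#P.parts - 1) by omega)
  rw [mul_add] at hmul
  omega

theorem hasRainbowSpanningTrees_of_isBaseColoring [Nonempty V] {J : Finset (Sym2 V)}
    (hJG : J ⊆ G.edgeFinset) {φ : Sym2 V → Fin t}
    (hφ : IsBaseColoring graphicRank (Fintype.card V - 1) J φ)
    (hinj : ∀ i, Set.InjOn c ({e ∈ J | φ e = i} : Finset (Sym2 V))) :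
    HasRainbowSpanningTrees G c t := by
  have hV : 0 < Fintype.card V := Fintype.card_pos
  have hadj {e : Sym2 V} (he : e ∈ J) : e ∈ G.edgeSet := SimpleGraph.mem_edgeFinset.1 (hJG he)
  have hsub (i : Fin t) :
      (SimpleGraph.fromEdgeSet (({e ∈ J | φ e = i} : Finset (Sym2 V)) : Set (Sym2 V))).edgeSet ⊆
        ({e ∈ J | φ e = i} : Finset (Sym2 V)) := by
    rw [SimpleGraph.edgeSet_fromEdgeSet]
    exact Set.sdiff_subset
  refine ⟨fun i => SimpleGraph.fromEdgeSet ({e ∈ J | φ e = i} : Finset (Sym2 V)), fun i => ?_,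
    fun i => ?_, fun i => (hinj i).mono (hsub i), fun i j hij => ?_⟩
  · rw [← SimpleGraph.edgeSet_subset_edgeSet]
    exact (hsub i).trans fun e he => hadj (mem_filter.1 he).1
  · obtain ⟨hcard, hrank⟩ := hφ i
    exact isTree_fromEdgeSet_of_graphicRank
      (fun e he => G.not_isDiag_of_mem_edgeSet (hadj (mem_filter.1 he).1)) (by omega) (by omega)
  · refine Set.disjoint_left.2 fun e hi hj => hij ?_
    exact (mem_filter.1 (hsub i hi)).2.symm.trans (mem_filter.1 (hsub j hj)).2

theorem hasRainbowSpanningTrees_of_forall_lt (ht : 0 < t) (hV : 2 ≤ Fintype.card V)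
    (hcross : ∀ P : Finpartition (univ : Finset V), t * (#P.parts - 1) ≤ #(edgesCrossing G P))
    (hc : ∀ P : Finpartition (univ : Finset V), 3 ≤ #P.parts →
      #(edgesNonCrossing G P) + t * (#P.parts - 2) < #(G.edgeFinset.image c)) :
    HasRainbowSpanningTrees G c t := by
  have : Nonempty V := Fintype.card_pos_iff.1 (by omega)
  have : Nonempty (Fin t) := ⟨⟨0, ht⟩⟩
  have hrank (S : Finset (Sym2 V)) : graphicRank S ≤ Fintype.card V - 1 :=
    Nat.le_sub_one_of_lt (graphicRank_add_one_le S)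
  obtain ⟨I, hIG, hI, hcI, hIcard⟩ := InducedIndep.exists_injOn_le_card
    (isSubmodular_graphicRank.const_mul t) (monotone_graphicRank.const_mul' t)
    (by simp [graphicRank_empty]) fun K hK => card_add_le_mul_graphicRank_add ht hV hcross hc hK
  obtain ⟨J, hIJ, hJG, hJ, hJcard⟩ := exists_superset_inducedIndep_card_ge hcross hIG hI
  obtain ⟨φ, hφ⟩ := isMatroidRank_graphicRank.exists_isBaseColoring (ι := Fin t) hrank
    (by simpa using hJ) (by simpa using hJcard)
  have hJc : Fintype.card (Fin t) * (Fintype.card V - 1 - 1) < #(J.image c) := by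
    have hle := card_le_card (image_subset_image (f := c) hIJ)
    rw [card_image_of_injOn hcI] at hle
    rw [Fintype.card_fin, show Fintype.card V - 1 - 1 = Fintype.card V - 2 from rfl]
    omega
  obtain ⟨ψ, hψ, hinj⟩ := hφ.exists_forall_injOn isMatroidRank_graphicRank hrank hJc
  exact hasRainbowSpanningTrees_of_isBaseColoring hJG hψ hinj

end AntiRamsey

/-- If every partition `P` of `V(G)` satisfies
`|cr(P,G)| ≥ t(|P|-1)`, then `r(G,t) = max_{P : |P| ≥ 3} { |E(P,G)| + t(|P|-2) }`. -/
theorem stmt1 {V : Type} [Fintype V] (G : SimpleGraph V) (t : ℕ) (ht : 0 < t)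
    (hV : 3 ≤ Fintype.card V)
    (h : ∀ P : Finpartition (Finset.univ : Finset V),
      t * (P.parts.card - 1) ≤ (edgesCrossing G P).card) :
    antiRamsey G t = maxNonCross3 G t := by
  apply le_antisymm
  · refine csSup_le' ?_
    rintro _ ⟨c, rfl, hc⟩
    by_contra! hlt
    exact hc (hasRainbowSpanningTrees_of_forall_lt ht (by omega) h fun P hP =>
      (le_maxNonCross3 hP).trans_lt hlt)
  · refine csSup_le' ?_
    rintro _ ⟨P, hP, rfl⟩
    exact card_edgesNonCrossing_add_le_antiRamsey ht hP (h P)
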